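/- Let p be a prime, l ≥ 1, and let ζ be a primitive p^l-th root of unity. If f(x), g(x) ∈ ℤ[x] satisfy f(ζ) = g(ζ), then for every integer k with 0 ≤ k < φ(p^l) one has f^{(k)}(1)/k! ≡ g^{(k)}(1)/k! (mod p). -/

import Mathlib

open Polynomial

/-!
Since `f - g` vanishes at `ζ`, it is divisible by the cyclotomic polynomial of index `p ^ l`, which
reduces to `(X - 1) ^ φ (p ^ l)` modulo `p`. Hence the first `φ (p ^ l)` Taylor coefficients of
`f - g` at `1` vanish modulo `p`. The `k`-th Taylor coefficient is the evaluated Hasse derivative,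
and `k!` times it is the evaluated `k`-th derivative.
-/

theorem eval_iterate_derivative_eq_factorial_mul_eval_hasseDeriv {R : Type*} [Semiring R]
    (f : R[X]) (r : R) (k : ℕ) :
    (derivative^[k] f).eval r = (k.factorial : R) * (hasseDeriv k f).eval r := by
  rw [← factorial_smul_hasseDeriv, LinearMap.smul_apply, eval_smul, nsmul_eq_mul]

theorem eval_hasseDeriv_map {R S : Type*} [Semiring R] [Semiring S] (φ : R →+* S)
    (f : R[X]) (r : R) (k : ℕ) :
    (hasseDeriv k (f.map φ)).eval (φ r) = φ ((hasseDeriv k f).eval r) := by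
  rw [← taylor_coeff, ← map_taylor, coeff_map, taylor_coeff]

theorem X_sub_C_pow_dvd_iff_eval_hasseDeriv_eq_zero {R : Type*} [CommRing R]
    {f : R[X]} {r : R} {n : ℕ} :
    (X - C r) ^ n ∣ f ↔ ∀ k < n, (hasseDeriv k f).eval r = 0 := by
  simp only [X_sub_C_pow_dvd_iff, X_pow_dvd_iff, ← taylor_apply, taylor_coeff]

theorem cyclotomic_prime_pow_eq_X_sub_one_pow_totient (R : Type*) [Ring R] (p : ℕ)
    [Fact p.Prime] [CharP R p] (l : ℕ) :
    cyclotomic (p ^ l) R = (X - 1) ^ (p ^ l).totient := by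
  have hp : p.Prime := Fact.out
  obtain rfl | hl := l.eq_zero_or_pos
  · simp
  · calc
      cyclotomic (p ^ l) R = cyclotomic 1 R ^ (p ^ l - p ^ (l - 1)) := by
        simpa only [mul_one] using cyclotomic_mul_prime_pow_eq R hp.not_dvd_one hl
      _ = (X - 1) ^ (p ^ l).totient := by
        rw [cyclotomic_one, Nat.totient_prime_pow hp hl, Nat.mul_sub_one, pow_sub_one_mul hl.ne']

theorem cyclotomic_dvd_iff_aeval_eq_zero {K : Type*} [CommRing K] [IsDomain K] [CharZero K]
    {n : ℕ} {ζ : K} (hζ : IsPrimitiveRoot ζ n) (hn : 0 < n) {f : ℤ[X]} :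
    cyclotomic n ℤ ∣ f ↔ aeval ζ f = 0 := by
  have hroot : aeval ζ (cyclotomic n ℤ) = 0 := by
    rw [← eval_map_algebraMap, map_cyclotomic]
    exact hζ.isRoot_cyclotomic hn
  have hint : IsIntegral ℤ ζ := hζ.isIntegral hn
  have hassociated : Associated (minpoly ℤ ζ) (cyclotomic n ℤ) :=
    (minpoly.prime_of_isIntegrallyClosed hint).irreducible.associated_of_dvd
      (cyclotomic.irreducible hn) (minpoly.isIntegrallyClosed_dvd hint hroot)
  rw [← hassociated.dvd_iff_dvd_left, minpoly.isIntegrallyClosed_dvd_iff hint]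

theorem dvd_eval_one_hasseDeriv_of_cyclotomic_prime_pow_dvd {p l k : ℕ} [Fact p.Prime] {f : ℤ[X]}
    (hf : cyclotomic (p ^ l) ℤ ∣ f) (hk : k < (p ^ l).totient) :
    (p : ℤ) ∣ (hasseDeriv k f).eval 1 := by
  have hmod : (X - C 1) ^ (p ^ l).totient ∣ f.map (Int.castRingHom (ZMod p)) := by
    rw [C_1, ← cyclotomic_prime_pow_eq_X_sub_one_pow_totient, ← map_cyclotomic_int]
    exact Polynomial.map_dvd _ hf
  rw [← ZMod.intCast_zmod_eq_zero_iff_dvd, ← eq_intCast (Int.castRingHom (ZMod p)),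
    ← eval_hasseDeriv_map, map_one]
  exact X_sub_C_pow_dvd_iff_eval_hasseDeriv_eq_zero.mp hmod k hk

theorem iterate_derivative_one_modEq_of_aeval_eq_general {K : Type*} [CommRing K] [IsDomain K]
    [CharZero K] {p : ℕ} (hp : p.Prime) {l : ℕ} {ζ : K} (hζ : IsPrimitiveRoot ζ (p ^ l))
    {f g : ℤ[X]} (hfg : aeval ζ f = aeval ζ g) {k : ℕ} (hk : k < (p ^ l).totient) :
    (p : ℤ) * (k.factorial : ℤ) ∣ (derivative^[k] f).eval 1 - (derivative^[k] g).eval 1 := by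
  have : Fact p.Prime := ⟨hp⟩
  have hcyclotomic : cyclotomic (p ^ l) ℤ ∣ f - g :=
    (cyclotomic_dvd_iff_aeval_eq_zero hζ (pow_pos hp.pos l)).mpr (by rw [map_sub, hfg, sub_self])
  rw [← eval_sub, ← iterate_derivative_sub,
    eval_iterate_derivative_eq_factorial_mul_eval_hasseDeriv, mul_comm (p : ℤ)]
  exact mul_dvd_mul_left _ (dvd_eval_one_hasseDeriv_of_cyclotomic_prime_pow_dvd hcyclotomic hk)

/-- Let `p` be a prime, `l ≥ 1`, and `ζ` a primitive `p^l`-th root of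
unity. If `f, g ∈ ℤ[x]` satisfy `f(ζ) = g(ζ)`, then for every `0 ≤ k < φ(p^l)` one has
`f^{(k)}(1)/k! ≡ g^{(k)}(1)/k! (mod p)`; equivalently `p * k!` divides
`f^{(k)}(1) − g^{(k)}(1)`. -/
theorem iterate_derivative_one_modEq_of_aeval_eq
    (p : ℕ) (hp : p.Prime) (l : ℕ) (hl : 1 ≤ l) (ζ : ℂ)
    (hζ : IsPrimitiveRoot ζ (p ^ l)) (f g : Polynomial ℤ)
    (hfg : Polynomial.aeval ζ f = Polynomial.aeval ζ g)
    (k : ℕ) (hk : k < Nat.totient (p ^ l)) :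
    ((p : ℤ) * (Nat.factorial k : ℤ)) ∣
      ((Polynomial.derivative^[k] f).eval 1 - (Polynomial.derivative^[k] g).eval 1) :=
  iterate_derivative_one_modEq_of_aeval_eq_general hp hζ hfg hk
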